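/- Let G be a connected weighted graph on a finite vertex set V with positive edge susceptances and weighted Laplacian L. Let C ⊆ V be a vertex cut set, let B be a nonempty union of the vertex sets of some (but not all) connected components of G − C, and A = V ∖ (B ∪ C), so that no edge of G joins A and B. Then for every injection vector p : V → ℝ with Σ_v p_v = 0 and p supported on B ∪ C (injections only at buses of the j-th sub-graph), there exists an injection vector q : V → ℝ with Σ_v q_v = 0 and q supported on C such that: for any θ_p, θ_q with L θ_p = p and L θ_q = q, the induced flows agree on every edge of the i-th sub-graph, i.e., b_e (θ_p(u) − θ_p(v)) = b_e (θ_q(u) − θ_q(v)) for every edge e = {u,v} with both endpoints in A ∪ C. -/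

import Mathlib

open Matrix

/-- The weighted Laplacian of a graph on the finite vertex set `V` whose edges are
the pairs `{u,v}` with `w u v > 0`, carrying susceptance `w u v`. -/
def weightedLaplacian {V : Type*} [Fintype V] [DecidableEq V] (w : V → V → ℝ) :
    Matrix V V ℝ :=
  Matrix.of fun u v => if u = v then ∑ x, w u x else -(w u v)

section WeightedLaplacian

variable {V : Type*} [Fintype V] [DecidableEq V] {w : V → V → ℝ}

lemma weightedLaplacian_mulVec_apply (hdiag : ∀ v, w v v = 0) (x : V → ℝ) (v : V) :
    (weightedLaplacian w *ᵥ x) v = ∑ u, w v u * (x v - x u) := by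
  have h : ∀ u, weightedLaplacian w v u * x u =
      (if v = u then (∑ y, w v y) * x v else 0) - w v u * x u := by
    intro u
    by_cases huv : v = u
    · subst huv
      simp [weightedLaplacian, hdiag]
    · simp [weightedLaplacian, huv]
  simp only [mulVec, dotProduct, h, Finset.sum_sub_distrib, mul_sub, Finset.sum_mul]
  simp

lemma sum_weightedLaplacian_mulVec (hsym : ∀ u v, w u v = w v u) (hdiag : ∀ v, w v v = 0)
    (x : V → ℝ) : ∑ v, (weightedLaplacian w *ᵥ x) v = 0 := by
  simp only [weightedLaplacian_mulVec_apply hdiag, mul_sub, Finset.sum_sub_distrib]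
  rw [sub_eq_zero, Finset.sum_comm]
  simp only [hsym]

/-- The Dirichlet energy identity. -/
lemma two_mul_dotProduct_weightedLaplacian (hsym : ∀ u v, w u v = w v u)
    (hdiag : ∀ v, w v v = 0) (x : V → ℝ) :
    2 * ∑ v, x v * (weightedLaplacian w *ᵥ x) v = ∑ v, ∑ u, w v u * (x v - x u) ^ 2 := by
  rw [two_mul]
  simp only [weightedLaplacian_mulVec_apply hdiag, Finset.mul_sum]
  have hswap : ∑ v, ∑ u, x v * (w v u * (x v - x u)) =
      ∑ v, ∑ u, x u * (w v u * (x u - x v)) := by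
    rw [Finset.sum_comm]
    exact Finset.sum_congr rfl fun v _ => Finset.sum_congr rfl fun u _ => by rw [hsym u v]
  nth_rewrite 2 [hswap]
  simp only [← Finset.sum_add_distrib]
  exact Finset.sum_congr rfl fun v _ => Finset.sum_congr rfl fun u _ => by ring

/-- On a connected graph, only constant vectors have zero Dirichlet energy. -/
lemma eq_of_dotProduct_weightedLaplacian_eq_zero (hsym : ∀ u v, w u v = w v u)
    (hdiag : ∀ v, w v v = 0) (hnonneg : ∀ u v, 0 ≤ w u v)
    (hconn : (SimpleGraph.fromRel fun u v => 0 < w u v).Connected) {x : V → ℝ}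
    (hx : ∑ v, x v * (weightedLaplacian w *ᵥ x) v = 0) (u v : V) : x u = x v := by
  have hterm : ∀ a b, 0 ≤ w a b * (x a - x b) ^ 2 := fun a b =>
    mul_nonneg (hnonneg a b) (sq_nonneg _)
  have henergy := two_mul_dotProduct_weightedLaplacian hsym hdiag x
  rw [hx, mul_zero, eq_comm,
    Finset.sum_eq_zero_iff_of_nonneg fun a _ => Finset.sum_nonneg fun b _ => hterm a b] at henergy
  have hedge : ∀ a b, 0 < w a b → x a = x b := by
    intro a b hab
    have h := (Finset.sum_eq_zero_iff_of_nonneg fun b _ => hterm a b).1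
      (henergy a (Finset.mem_univ a)) b (Finset.mem_univ b)
    exact sub_eq_zero.1 (pow_eq_zero_iff two_ne_zero |>.1 ((mul_eq_zero.1 h).resolve_left hab.ne'))
  obtain ⟨p⟩ := hconn.preconnected u v
  induction p with
  | nil => rfl
  | cons hadj _ ih =>
    refine Eq.trans ?_ ih
    rcases (SimpleGraph.fromRel_adj _ _ _).1 hadj with ⟨-, h | h⟩
    · exact hedge _ _ h
    · exact (hedge _ _ h).symm

/-- Angles with equal injections differ by a constant. -/
lemma sub_eq_sub_of_weightedLaplacian_mulVec_eq (hsym : ∀ u v, w u v = w v u)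
    (hdiag : ∀ v, w v v = 0) (hnonneg : ∀ u v, 0 ≤ w u v)
    (hconn : (SimpleGraph.fromRel fun u v => 0 < w u v).Connected) {x y : V → ℝ}
    (hxy : weightedLaplacian w *ᵥ x = weightedLaplacian w *ᵥ y) (u v : V) :
    x u - x v = y u - y v := by
  have h := eq_of_dotProduct_weightedLaplacian_eq_zero hsym hdiag hnonneg hconn
    (x := x - y) (by simp [mulVec_sub, hxy]) u v
  simp only [Pi.sub_apply] at h
  linarith

/-- Solvability of the Dirichlet problem: values prescribed off a proper subset `B` extend
harmonically to `B`. -/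
lemma exists_harmonic_extension (hsym : ∀ u v, w u v = w v u)
    (hdiag : ∀ v, w v v = 0) (hnonneg : ∀ u v, 0 ≤ w u v)
    (hconn : (SimpleGraph.fromRel fun u v => 0 < w u v).Connected)
    {B : Finset V} {a : V} (ha : a ∉ B) (x : V → ℝ) :
    ∃ y : V → ℝ, (∀ v ∉ B, y v = x v) ∧ ∀ v ∈ B, (weightedLaplacian w *ᵥ y) v = 0 := by
  let f : (V → ℝ) →ₗ[ℝ] (V → ℝ) :=
    LinearMap.pi fun v => if v ∈ B then LinearMap.proj v ∘ₗ (weightedLaplacian w).mulVecLin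
      else LinearMap.proj v
  have hf_mem : ∀ y, ∀ v ∈ B, f y v = (weightedLaplacian w *ᵥ y) v := by
    intro y v hv
    simp [f, hv]
  have hf_not_mem : ∀ y, ∀ v ∉ B, f y v = y v := by
    intro y v hv
    simp [f, hv]
  have hinj : Function.Injective f := by
    rw [injective_iff_map_eq_zero]
    intro y hy
    have hconst := eq_of_dotProduct_weightedLaplacian_eq_zero hsym hdiag hnonneg hconn (x := y)
      (Finset.sum_eq_zero fun v _ => by
        by_cases hv : v ∈ B
        · rw [← hf_mem y v hv, hy, Pi.zero_apply, mul_zero]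
        · rw [← hf_not_mem y v hv, hy, Pi.zero_apply, zero_mul])
    funext v
    rw [hconst v a, ← hf_not_mem y a ha, hy]
    rfl
  obtain ⟨y, hy⟩ := LinearMap.injective_iff_surjective.1 hinj fun v => if v ∈ B then 0 else x v
  refine ⟨y, fun v hv => ?_, fun v hv => ?_⟩
  · rw [← hf_not_mem y v hv, hy]
    exact if_neg hv
  · rw [← hf_mem y v hv, hy]
    exact if_pos hv

end WeightedLaplacian

/-- Proposition 2.  Decompose the connected grid by a vertex cut set `C`: `B` is a
nonempty union of some (but not all) of the connected components of `G − C`,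
`A = V ∖ (B ∪ C)` is nonempty, and no edge joins `A` and `B`.  Then for every
balanced injection vector `p` supported on `B ∪ C` there is a balanced injection
vector `q` supported on `C` such that for any angle solutions `L θp = p` and
`L θq = q`, the induced flows agree on every edge with both endpoints in `A ∪ C`. -/
theorem cut_set_replicates_injections {V : Type*} [Fintype V] [DecidableEq V]
    (w : V → V → ℝ)
    (hsym : ∀ u v, w u v = w v u)
    (hdiag : ∀ v, w v v = 0)
    (hnonneg : ∀ u v, 0 ≤ w u v)
    (hconn : (SimpleGraph.fromRel fun u v => 0 < w u v).Connected)
    (C B : Finset V) (hCB : Disjoint C B) (hB : B.Nonempty)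
    (A : Finset V) (hA : A = (C ∪ B)ᶜ) (hAne : A.Nonempty)
    (hsep : ∀ a ∈ A, ∀ b ∈ B, w a b = 0) :
    ∀ p : V → ℝ, (∑ v, p v = 0) → (∀ v ∈ A, p v = 0) →
      ∃ q : V → ℝ, (∑ v, q v = 0) ∧ (∀ v, v ∉ C → q v = 0) ∧
        ∀ θp θq : V → ℝ,
          weightedLaplacian w *ᵥ θp = p →
          weightedLaplacian w *ᵥ θq = q →
          ∀ u ∈ A ∪ C, ∀ v ∈ A ∪ C, 0 < w u v →
            w u v * (θp u - θp v) = w u v * (θq u - θq v) := by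
  intro p _ hpA
  have hA_B : ∀ v ∈ A, v ∉ B := by
    intro v hv
    simp only [hA, Finset.mem_compl, Finset.mem_union] at hv
    tauto
  have hAC_B : ∀ v ∈ A ∪ C, v ∉ B := fun v hv => (Finset.mem_union.1 hv).elim (hA_B v)
    fun h => Finset.disjoint_left.1 hCB h
  by_cases hsol : ∃ θ, weightedLaplacian w *ᵥ θ = p
  · obtain ⟨θ, hθ⟩ := hsol
    obtain ⟨a, ha⟩ := hAne
    obtain ⟨φ, hφ, hφB⟩ := exists_harmonic_extension hsym hdiag hnonneg hconn (hA_B a ha) θ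
    refine ⟨weightedLaplacian w *ᵥ φ, sum_weightedLaplacian_mulVec hsym hdiag φ,
      fun v hv => ?_, fun θp θq hθp hθq u hu v hv _ => ?_⟩
    · by_cases hvB : v ∈ B
      · exact hφB v hvB
      · have hvA : v ∈ A := by simp [hA, hv, hvB]
        rw [← hpA v hvA, ← hθ, weightedLaplacian_mulVec_apply hdiag,
          weightedLaplacian_mulVec_apply hdiag]
        refine Finset.sum_congr rfl fun u _ => ?_
        by_cases hu : u ∈ B
        · simp [hsep v hvA u hu]
        · rw [hφ v hvB, hφ u hu]
    · rw [sub_eq_sub_of_weightedLaplacian_mulVec_eq hsym hdiag hnonneg hconn (hθp.trans hθ.symm),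
        sub_eq_sub_of_weightedLaplacian_mulVec_eq hsym hdiag hnonneg hconn hθq,
        hφ u (hAC_B u hu), hφ v (hAC_B v hv)]
  · exact ⟨0, by simp, by simp, fun θp _ hθp => (hsol ⟨θp, hθp⟩).elim⟩
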